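/- Let (π, ℋ) be the Heisenberg representation with central character ψ and let ρ : Sp(V) → GL(ℋ) be a group homomorphism satisfying ρ(g) ∘ π(h) ∘ ρ(g)⁻¹ = π(g·h) for all g ∈ Sp(V), h ∈ H. Define the kernel K : Sp(V) × V → ℂ by K(g, v) = (dim ℋ)⁻¹ · Tr(ρ(g) ∘ π((v,0))⁻¹). Then for every g ∈ Sp(V) one has the inversion formula Σ_{v∈V} K(g, v) · π((v,0)) = ρ(g); i.e., the kernel K determines the Weil representation completely. -/

import Mathlib

/-!
The Weyl operators `T v = π (v, 0)` satisfy `T u * T v = ψ (ω u v / 2) • T (u + v)`, so that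
`T (-v) * T (-u) * T v = ψ (ω v u) • T (-u)`. By Schur's lemma the twirl
`∑ u, T u * B * T (-u)` of any operator `B` is the scalar `|V| * tr B / dim ℋ`. Taking
`B = A * T (-v)` turns `|V| * tr (A * T (-v)) / dim ℋ • T v` into
`∑ u, ψ (ω v u) • (T u * A * T (-u))`; summing over `v`, orthogonality of characters leaves only
`u = 0`, that is `|V| • A`. This recovers every operator `A` from the traces
`tr (A * T (-v))`; the kernel formula is the case `A = ρ g`.
-/

open scoped BigOperators
attribute [local instance] Classical.propDecidable

variable {k : Type} [Field k] [Fintype k]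
variable {V : Type} [AddCommGroup V] [Module k V] [Fintype V]

/-- Multiplication of the Heisenberg group `H = V × k`:
`(v,z)·(v',z') = (v + v', z + z' + (1/2) ω(v,v'))`. -/
def hMul (ω : V →ₗ[k] V →ₗ[k] k) (x y : V × k) : V × k :=
  (x.1 + y.1, x.2 + y.2 + (2 : k)⁻¹ * ω x.1 y.1)

/-- Inversion in the Heisenberg group. -/
def hInv (ω : V →ₗ[k] V →ₗ[k] k) (x : V × k) : V × k :=
  (-x.1, -x.2 + (2 : k)⁻¹ * ω x.1 x.1)

/-- Right translation `(π(h)f)(h') = f(h'·h)` of functions on the Heisenberg group. -/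
def rt (ω : V →ₗ[k] V →ₗ[k] k) (h : V × k) (f : V × k → ℂ) : V × k → ℂ :=
  fun x => f (hMul ω x h)

/-- The model `ℂ(L\H, ψ)`: functions `f : H → ℂ` with `f((0,z)·(l,0)·h) = ψ(z)·f(h)`
for `z ∈ k`, `l ∈ L`. -/
noncomputable def model (ω : V →ₗ[k] V →ₗ[k] k) (L : Submodule k V) (ψ : k → ℂ) :
    Submodule ℂ (V × k → ℂ) where
  carrier := {f | ∀ z : k, ∀ l ∈ L, ∀ h : V × k,
    f (hMul ω ((0 : V), z) (hMul ω (l, (0 : k)) h)) = ψ z * f h}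
  add_mem' := by
    intro f g hf hg z l hl h
    simp only [Pi.add_apply, hf z l hl h, hg z l hl h]; ring
  zero_mem' := by intro z l hl h; simp
  smul_mem' := by
    intro c f hf z l hl h
    simp only [Pi.smul_apply, smul_eq_mul, hf z l hl h]; ring

/-- The space `ℂ(M\H/L, ψ)`: functions `K : H → ℂ` with
`K((0,z)·(m,0)·h·(l,0)) = ψ(z)·K(h)` for `z ∈ k`, `m ∈ M`, `l ∈ L`. -/
noncomputable def biModel (ω : V →ₗ[k] V →ₗ[k] k) (M L : Submodule k V) (ψ : k → ℂ) :
    Submodule ℂ (V × k → ℂ) where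
  carrier := {f | ∀ z : k, ∀ m ∈ M, ∀ l ∈ L, ∀ h : V × k,
    f (hMul ω (hMul ω (hMul ω ((0 : V), z) (m, (0 : k))) h) (l, (0 : k))) = ψ z * f h}
  add_mem' := by
    intro f g hf hg z m hm l hl h
    simp only [Pi.add_apply, hf z m hm l hl h, hg z m hm l hl h]; ring
  zero_mem' := by intro z m hm l hl h; simp
  smul_mem' := by
    intro c f hf z m hm l hl h
    simp only [Pi.smul_apply, smul_eq_mul, hf z m hm l hl h]; ring

/-- The averaging operator `F_{M,L}[f](h) = ∑_{m ∈ M} f((m,0)·h)`. -/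
noncomputable def avg (ω : V →ₗ[k] V →ₗ[k] k) (M : Submodule k V) :
    (V × k → ℂ) →ₗ[ℂ] (V × k → ℂ) where
  toFun f := fun h => ∑ m : M, f (hMul ω ((m : V), (0 : k)) h)
  map_add' f g := by funext h; simp [Finset.sum_add_distrib]
  map_smul' c f := by funext h; simp [Finset.mul_sum]

/-- Normalized convolution on the Heisenberg group:
`(K ∗ f)(h) = q^{-(n+1)} ∑_{h' ∈ H} K(h')·f(h'⁻¹·h)`. -/
noncomputable def conv (ω : V →ₗ[k] V →ₗ[k] k) (n : ℕ) (K f : V × k → ℂ) : V × k → ℂ :=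
  fun h => ((Fintype.card k : ℂ))⁻¹ ^ (n + 1) * ∑ x : V × k, K x * f (hMul ω (hInv ω x) h)

/-- The one-dimensional Gauss sum `G(ψ) = ∑_{z ∈ k} ψ(z²/2)`. -/
noncomputable def gaussSum' (ψ : k → ℂ) : ℂ := ∑ z : k, ψ ((2 : k)⁻¹ * z ^ 2)

/-- The normalization coefficient `A_{M°,L°} = (G(ψ)/q)ⁿ · σ((−1)^{n(n−1)/2} ω_∧(o_L,o_M))`,
with the orientations presented by bases and `ω_∧(o_L,o_M) = det (ω(bL i, bM j))_{ij}`,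
and `σ` the Legendre (quadratic) character. -/
noncomputable def Acoef (ω : V →ₗ[k] V →ₗ[k] k) (ψ : k → ℂ) (n : ℕ)
    {M L : Submodule k V} (bM : Module.Basis (Fin n) k M) (bL : Module.Basis (Fin n) k L) : ℂ :=
  (gaussSum' ψ / (Fintype.card k : ℂ)) ^ n *
    ((quadraticChar k ((-1 : k) ^ (n * (n - 1) / 2) *
      (Matrix.of fun i j => ω ((bL i : V)) ((bM j : V))).det) : ℤ) : ℂ)

/-- The symplectic group `Sp(V)` of linear automorphisms of `V` preserving `ω`. -/
def Sp (ω : V →ₗ[k] V →ₗ[k] k) : Subgroup (V ≃ₗ[k] V) where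
  carrier := {g | ∀ u v : V, ω (g u) (g v) = ω u v}
  one_mem' := by intro u v; rfl
  mul_mem' := by
    intro a b ha hb u v
    have h : ∀ x : V, (a * b) x = a (b x) := fun x => rfl
    rw [h, h, ha, hb]
  inv_mem' := by
    intro a ha u v
    have h1 : a (a⁻¹ u) = u := a.apply_symm_apply u
    have h2 : a (a⁻¹ v) = v := a.apply_symm_apply v
    have := ha (a⁻¹ u) (a⁻¹ v)
    rw [h1, h2] at this
    exact this.symm

/-- A nontrivial (nowhere-vanishing) additive character `ψ : k → ℂ*`. -/
def IsAddChar (ψ : k → ℂ) : Prop :=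
  (∀ a b : k, ψ (a + b) = ψ a * ψ b) ∧ (∀ a : k, ψ a ≠ 0) ∧ (∃ a : k, ψ a ≠ 1)

/-- `π` is a Heisenberg representation on `ℋ` with central character `ψ`:
a representation of `H = V × k` by linear maps, with the center acting by `ψ`,
which is irreducible. -/
def IsHeisenbergRep (ω : V →ₗ[k] V →ₗ[k] k) (ψ : k → ℂ)
    {ℋ : Type} [AddCommGroup ℋ] [Module ℂ ℋ] (π : V × k → (ℋ →ₗ[ℂ] ℋ)) : Prop :=
  π ((0 : V), (0 : k)) = LinearMap.id ∧
  (∀ x y : V × k, π (hMul ω x y) = (π x).comp (π y)) ∧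
  (∀ z : k, π ((0 : V), z) = ψ z • LinearMap.id) ∧
  (∀ W : Submodule ℂ ℋ, (∀ x : V × k, ∀ w ∈ W, π x w ∈ W) → W = ⊥ ∨ W = ⊤)

/-- The action `g_*` of a symplectic automorphism on functions on `H`, `(g_* f)(h) = f(g⁻¹·h)`. -/
def gstar (g : V ≃ₗ[k] V) (f : V × k → ℂ) : V × k → ℂ :=
  fun x => f (g.symm x.1, x.2)

section Schur

variable {ι F M : Type*} [Field F] [AddCommGroup M] [Module F M]

/-- Irreducibility of a family of endomorphisms: no subspace other than `⊥` and `⊤` is stable under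
all of them. The zero space is allowed. -/
def IsIrreducibleFamily (T : ι → Module.End F M) : Prop :=
  ∀ U : Submodule F M, (∀ i, U ∈ (T i).invtSubmodule) → U = ⊥ ∨ U = ⊤

theorem IsIrreducibleFamily.exists_eq_smul_one_of_commute [IsAlgClosed F] [FiniteDimensional F M]
    [Nontrivial M] {T : ι → Module.End F M} (hT : IsIrreducibleFamily T) {S : Module.End F M}
    (hS : ∀ i, Commute S (T i)) : ∃ c : F, S = c • 1 := by
  obtain ⟨c, hc⟩ := Module.End.exists_eigenvalue S
  have eigenspace_eq_top : S.eigenspace c = ⊤ :=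
    (hT _ fun i ↦ Module.End.mapsTo_genEigenspace_of_comm (hS i) c 1).resolve_left hc
  refine ⟨c, LinearMap.ext fun x ↦ ?_⟩
  exact Module.End.mem_eigenspace_iff.mp (eigenspace_eq_top ▸ Submodule.mem_top)

theorem IsIrreducibleFamily.finrank_smul_eq_trace_smul_one [IsAlgClosed F]
    [FiniteDimensional F M] [Nontrivial M] {T : ι → Module.End F M} (hT : IsIrreducibleFamily T)
    {S : Module.End F M} (hS : ∀ i, Commute S (T i)) :
    (Module.finrank F M : F) • S = LinearMap.trace F M S • 1 := by
  obtain ⟨c, rfl⟩ := hT.exists_eq_smul_one_of_commute hS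
  rw [map_smul, LinearMap.trace_one, smul_smul, smul_eq_mul, mul_comm]

end Schur

section WeylSystem

variable {𝕜 E F R : Type*} [Field 𝕜] [AddCommGroup E] [Module 𝕜 E]

theorem sum_addChar_bilinForm [Fintype E] [CommRing F] [IsDomain F]
    {ω : LinearMap.BilinForm 𝕜 E} (hω : ω.SeparatingRight) {ψ : AddChar 𝕜 F} (hψ : ψ ≠ 0) (u : E) :
    ∑ v, ψ (ω v u) = if u = 0 then (Fintype.card E : F) else 0 := by
  split_ifs with hu
  · simp [hu]
  obtain ⟨w, hw⟩ : ∃ w, ω w u ≠ 0 := by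
    by_contra! h
    exact hu (hω u h)
  have surjective : Function.Surjective (ω.flip u) :=
    LinearMap.surjective fun h ↦ hw (LinearMap.congr_fun h w)
  have nontrivial : ψ.compAddMonoidHom (ω.flip u : E →+ 𝕜) ≠ 0 := fun h ↦
    hψ (AddChar.compAddMonoidHom_injective_left _ surjective h)
  exact (AddChar.sum_eq_ite _).trans (if_neg nontrivial)

/-- A Weyl system over `(E, ω)` with character `ψ`: the operators by which the elements `(v, 0)` of
the Heisenberg group of `ω` act in a representation with central character `ψ`. It is
meant for odd characteristic: in characteristic two `2⁻¹ = 0`. -/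
structure IsWeylSystem [CommRing F] [Ring R] [Algebra F R] (ω : LinearMap.BilinForm 𝕜 E)
    (ψ : AddChar 𝕜 F) (T : E → R) : Prop where
  map_zero : T 0 = 1
  mul_eq_smul (u v : E) : T u * T v = ψ (2⁻¹ * ω u v) • T (u + v)

/-- The twirl of `B` by a family `T`: the sum of the conjugates of `B`, where `T (-u)` stands for
the inverse of `T u`. -/
def twirl [Fintype E] [Ring R] (T : E → R) (B : R) : R := ∑ u, T u * B * T (-u)

namespace IsWeylSystem

section Algebra

variable [CommRing F] [Ring R] [Algebra F R] {ω : LinearMap.BilinForm 𝕜 E} {ψ : AddChar 𝕜 F}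
  {T : E → R}

theorem mul_neg_cancel (hT : IsWeylSystem ω ψ T) (hω : ω.IsAlt) (v : E) : T v * T (-v) = 1 := by
  simp [hT.mul_eq_smul, hT.map_zero, hω.self_eq_zero]

theorem neg_mul_cancel (hT : IsWeylSystem ω ψ T) (hω : ω.IsAlt) (v : E) : T (-v) * T v = 1 := by
  simpa only [neg_neg] using hT.mul_neg_cancel hω (-v)

theorem mul_conj_mul_neg (hT : IsWeylSystem ω ψ T) (hω : ω.IsAlt) (u w : E) (B : R) :
    T w * (T u * B * T (-u)) * T (-w) = T (w + u) * B * T (-(w + u)) := by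
  have phase_cancels : 2⁻¹ * ω (-u) (-w) + 2⁻¹ * ω w u = 0 := by
    rw [← hω.neg_eq u w]
    simp
  calc T w * (T u * B * T (-u)) * T (-w)
      = (T w * T u) * B * (T (-u) * T (-w)) := by noncomm_ring
    _ = ψ (2⁻¹ * ω (-u) (-w) + 2⁻¹ * ω w u) • (T (w + u) * B * T (-(w + u))) := by
        rw [hT.mul_eq_smul, hT.mul_eq_smul, neg_add_rev, AddChar.map_add_eq_mul, mul_smul]
        simp only [smul_mul_assoc, mul_smul_comm]
    _ = T (w + u) * B * T (-(w + u)) := by rw [phase_cancels, AddChar.map_zero_eq_one, one_smul]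

theorem neg_mul_neg_mul (hT : IsWeylSystem ω ψ T) (hω : ω.IsAlt) (h2 : (2 : 𝕜) ≠ 0) (u v : E) :
    T (-v) * T (-u) * T v = ψ (ω v u) • T (-u) := by
  have phase : 2⁻¹ * ω (-v) (-u) + 2⁻¹ * ω (-v + -u) v = ω v u := by
    simp only [map_neg, map_add, LinearMap.neg_apply, LinearMap.add_apply, hω.self_eq_zero,
      hω.neg_eq u v]
    field_simp
    ring
  rw [hT.mul_eq_smul, smul_mul_assoc, hT.mul_eq_smul, smul_smul, ← AddChar.map_add_eq_mul, phase,
    neg_add_cancel_comm]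

theorem commute_twirl [Fintype E] (hT : IsWeylSystem ω ψ T) (hω : ω.IsAlt) (B : R) (w : E) :
    Commute (twirl T B) (T w) := by
  have conj_twirl : T w * twirl T B * T (-w) = twirl T B := by
    simp only [twirl, Finset.mul_sum, Finset.sum_mul, hT.mul_conj_mul_neg hω]
    exact Fintype.sum_equiv (Equiv.addLeft w) _ _ fun _ ↦ rfl
  calc twirl T B * T w
      = T w * twirl T B * (T (-w) * T w) := by rw [← mul_assoc, conj_twirl]
    _ = T w * twirl T B := by rw [hT.neg_mul_cancel hω, mul_one]

theorem twirl_mul_neg_mul [Fintype E] (hT : IsWeylSystem ω ψ T) (hω : ω.IsAlt)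
    (h2 : (2 : 𝕜) ≠ 0) (A : R) (v : E) :
    twirl T (A * T (-v)) * T v = ∑ u, ψ (ω v u) • (T u * A * T (-u)) := by
  rw [twirl, Finset.sum_mul]
  refine Finset.sum_congr rfl fun u _ ↦ ?_
  rw [← mul_smul_comm, ← hT.neg_mul_neg_mul hω h2]
  simp only [mul_assoc]

theorem sum_twirl_mul_neg_mul [Fintype E] [IsDomain F] (hT : IsWeylSystem ω ψ T) (hω : ω.IsAlt)
    (hsep : ω.SeparatingRight) (h2 : (2 : 𝕜) ≠ 0) (hψ : ψ ≠ 0) (A : R) :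
    ∑ v, twirl T (A * T (-v)) * T v = (Fintype.card E : F) • A := by
  calc ∑ v, twirl T (A * T (-v)) * T v
      = ∑ u, (∑ v, ψ (ω v u)) • (T u * A * T (-u)) := by
        simp only [hT.twirl_mul_neg_mul hω h2, Finset.sum_smul]
        exact Finset.sum_comm
    _ = (Fintype.card E : F) • A := by
        simp [sum_addChar_bilinForm hsep hψ, hT.map_zero]

end Algebra

section Trace

variable [Field F] {M : Type*} [AddCommGroup M] [Module F M] [Fintype E]
  {ω : LinearMap.BilinForm 𝕜 E} {ψ : AddChar 𝕜 F} {T : E → Module.End F M}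

theorem trace_twirl (hT : IsWeylSystem ω ψ T) (hω : ω.IsAlt) (B : Module.End F M) :
    LinearMap.trace F M (twirl T B) = Fintype.card E * LinearMap.trace F M B := by
  have trace_conj (u : E) :
      LinearMap.trace F M (T u * B * T (-u)) = LinearMap.trace F M B := by
    rw [LinearMap.trace_mul_comm, ← mul_assoc, hT.neg_mul_cancel hω, one_mul]
  simp [twirl, trace_conj]

variable [IsAlgClosed F] [FiniteDimensional F M] [Nontrivial M]

theorem finrank_smul_twirl (hT : IsWeylSystem ω ψ T) (hω : ω.IsAlt)
    (hirr : IsIrreducibleFamily T) (B : Module.End F M) :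
    (Module.finrank F M : F) • twirl T B = (Fintype.card E * LinearMap.trace F M B) • 1 := by
  rw [hirr.finrank_smul_eq_trace_smul_one (hT.commute_twirl hω B), hT.trace_twirl hω]

theorem sum_trace_smul (hT : IsWeylSystem ω ψ T) (hω : ω.IsAlt) (hsep : ω.SeparatingRight)
    (hirr : IsIrreducibleFamily T) (h2 : (2 : 𝕜) ≠ 0) (hψ : ψ ≠ 0)
    (hE : (Fintype.card E : F) ≠ 0) (A : Module.End F M) :
    ∑ v, LinearMap.trace F M (A * T (-v)) • T v = (Module.finrank F M : F) • A := by
  refine smul_right_injective _ hE ?_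
  calc (Fintype.card E : F) • ∑ v, LinearMap.trace F M (A * T (-v)) • T v
      = ∑ v, (Module.finrank F M : F) • twirl T (A * T (-v)) * T v := by
        simp only [Finset.smul_sum, hT.finrank_smul_twirl hω hirr, smul_smul, smul_mul_assoc,
          one_mul]
    _ = (Module.finrank F M : F) • (Fintype.card E : F) • A := by
        rw [← hT.sum_twirl_mul_neg_mul hω hsep h2 hψ, Finset.smul_sum]
        simp only [smul_mul_assoc]
    _ = (Fintype.card E : F) • (Module.finrank F M : F) • A := smul_comm _ _ _

end Trace

end IsWeylSystem

end WeylSystem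

section HeisenbergRep

variable {𝕜 E : Type} [Field 𝕜]

/-- The bundled additive character underlying `IsAddChar`. -/
def IsAddChar.toAddChar {ψ : 𝕜 → ℂ} (hψ : IsAddChar ψ) : AddChar 𝕜 ℂ where
  toFun := ψ
  map_zero_eq_one' := by
    have h : ψ 0 * ψ 0 = ψ 0 * 1 := by rw [← hψ.1, add_zero, mul_one]
    exact mul_left_cancel₀ (hψ.2.1 0) h
  map_add_eq_mul' := hψ.1

theorem IsAddChar.toAddChar_ne_zero {ψ : 𝕜 → ℂ} (hψ : IsAddChar ψ) : hψ.toAddChar ≠ 0 :=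
  AddChar.ne_zero_iff.mpr hψ.2.2

namespace IsHeisenbergRep

variable [AddCommGroup E] [Module 𝕜 E] {ω : E →ₗ[𝕜] E →ₗ[𝕜] 𝕜} {ψ : 𝕜 → ℂ}
  {ℋ : Type} [AddCommGroup ℋ] [Module ℂ ℋ] {π : E × 𝕜 → (ℋ →ₗ[ℂ] ℋ)}

theorem apply_mk (hπ : IsHeisenbergRep ω ψ π) (v : E) (z : 𝕜) : π (v, z) = ψ z • π (v, 0) := by
  have h := hπ.2.1 (0, z) (v, 0)
  simpa [hMul, hπ.2.2.1, LinearMap.smul_comp] using h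

theorem isWeylSystem (hπ : IsHeisenbergRep ω ψ π) (hψ : IsAddChar ψ) :
    IsWeylSystem ω hψ.toAddChar (R := Module.End ℂ ℋ) fun v ↦ π (v, 0) where
  map_zero := hπ.1
  mul_eq_smul u v := by
    have h := hπ.2.1 (u, 0) (v, 0)
    simp only [hMul, add_zero, zero_add] at h
    exact h.symm.trans (hπ.apply_mk _ _)

theorem isIrreducibleFamily (hπ : IsHeisenbergRep ω ψ π) :
    IsIrreducibleFamily (F := ℂ) fun v ↦ π (v, 0) := by
  intro U hU
  refine hπ.2.2.2 U fun ⟨v, z⟩ x hx ↦ ?_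
  rw [hπ.apply_mk]
  exact U.smul_mem _ (hU v hx)

end IsHeisenbergRep

theorem weil_kernel_inversion_general [AddCommGroup E] [Module 𝕜 E] [Fintype E]
    (ω : E →ₗ[𝕜] E →ₗ[𝕜] 𝕜)
    (hchar : ringChar 𝕜 ≠ 2)
    (halt : ∀ v : E, ω v v = 0)
    (hnd : ∀ v : E, (∀ u : E, ω v u = 0) → v = 0)
    (ψ : 𝕜 → ℂ) (hψ : IsAddChar ψ)
    (ℋ : Type) [AddCommGroup ℋ] [Module ℂ ℋ] [FiniteDimensional ℂ ℋ] [Nontrivial ℋ]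
    (π : E × 𝕜 → (ℋ →ₗ[ℂ] ℋ)) (hπ : IsHeisenbergRep ω ψ π) (A : ℋ →ₗ[ℂ] ℋ) :
    ∑ v : E, ((Module.finrank ℂ ℋ : ℂ)⁻¹ *
      LinearMap.trace ℂ ℋ (A ∘ₗ π (hInv ω (v, (0 : 𝕜))))) • π (v, (0 : 𝕜)) = A := by
  have ω_alt : ω.IsAlt := halt
  have ω_separatingRight : ω.SeparatingRight :=
    ω_alt.isRefl.nondegenerate_iff_separatingLeft.mpr hnd |>.2
  have finrank_ne_zero : (Module.finrank ℂ ℋ : ℂ) ≠ 0 :=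
    Nat.cast_ne_zero.mpr Module.finrank_pos.ne'
  have hInv_mk (v : E) : hInv ω (v, 0) = (-v, 0) := by simp [hInv, halt]
  have sum_trace := (hπ.isWeylSystem hψ).sum_trace_smul ω_alt ω_separatingRight
    hπ.isIrreducibleFamily (Ring.two_ne_zero hchar) hψ.toAddChar_ne_zero
    (Nat.cast_ne_zero.mpr Fintype.card_ne_zero) A
  simp only [hInv_mk, mul_smul, ← Finset.smul_sum]
  exact (inv_smul_eq_iff₀ finrank_ne_zero).mpr sum_trace

end HeisenbergRep

/-- the kernel `K(g,v) = (dim ℋ)⁻¹·Tr(ρ(g) ∘ π((v,0))⁻¹)` of the Weil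
representation satisfies the inversion formula `∑_v K(g,v)·π((v,0)) = ρ(g)`. -/
theorem weil_kernel_inversion
    (ω : V →ₗ[k] V →ₗ[k] k) (n : ℕ)
    (hchar : ringChar k ≠ 2)
    (hdim : Module.finrank k V = 2 * n)
    (halt : ∀ v : V, ω v v = 0)
    (hnd : ∀ v : V, (∀ u : V, ω v u = 0) → v = 0)
    (ψ : k → ℂ) (hψ : IsAddChar ψ)
    (ℋ : Type) [AddCommGroup ℋ] [Module ℂ ℋ] [FiniteDimensional ℂ ℋ] [Nontrivial ℋ]
    (π : V × k → (ℋ →ₗ[ℂ] ℋ)) (hπ : IsHeisenbergRep ω ψ π)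
    (ρ : ↥(Sp ω) →* (ℋ ≃ₗ[ℂ] ℋ))
    (hρ : ∀ (g : Sp ω) (v : V) (z : k) (x : ℋ),
      ρ g (π (v, z) ((ρ g)⁻¹ x)) = π ((g : V ≃ₗ[k] V) v, z) x)
    (K : ↥(Sp ω) → V → ℂ)
    (hK : ∀ (g : Sp ω) (v : V),
      K g v = (Module.finrank ℂ ℋ : ℂ)⁻¹ *
        LinearMap.trace ℂ ℋ ((ρ g).toLinearMap ∘ₗ π (hInv ω (v, (0 : k))))) :
    ∀ g : Sp ω, ∑ v : V, K g v • π (v, (0 : k)) = (ρ g).toLinearMap := by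
  intro g
  simpa only [hK] using
    weil_kernel_inversion_general ω hchar halt hnd ψ hψ ℋ π hπ (ρ g).toLinearMap
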